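/- For every integer k > 1 with smallest prime divisor p, and for every α with 0 < α < c/(p−1) for a suitable absolute constant c > 0, there exist arbitrarily large α-expanding graphs in which every cycle has length divisible by p; in particular, these graphs contain no cycle of length congruent to 1 modulo k. -/

import Mathlib

open Finset

variable {V : Type*}

/-- The external neighborhood of a vertex set `X` in a graph `G`:
vertices outside `X` with a neighbor in `X`. -/
noncomputable def extNbhd [Fintype V] (G : SimpleGraph V) (X : Finset V) : Finset V :=
  @Finset.filter V (fun v => v ∉ X ∧ ∃ u ∈ X, G.Adj u v) (Classical.decPred _) Finset.univ

/-- An `n`-vertex graph is an `α`-expander if every vertex set of size at most `n/2`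
has external neighborhood of size at least `α` times its size. -/
def IsExpander [Fintype V] (G : SimpleGraph V) (α : ℝ) : Prop :=
  ∀ X : Finset V, (X.card : ℝ) ≤ (Fintype.card V : ℝ) / 2 →
    α * (X.card : ℝ) ≤ ((extNbhd G X).card : ℝ)

/-! Consider the multigraph on `V` that joins `σ i v` to `v` for three uniformly random permutations
`σ i`. Since `σ • A` is uniform among the sets of the size `s` of `A`, the sum over all `σ` of
`y ^ #(A ∆ (σ • A))` is at most `n! * (1 + y) ^ n / n.choose s`. For a suitable `y`, the inequality
of Markov and a union bound over `A` show that some choice of the `σ i` gives an edge expander of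
maximum degree `6`.

Subdivide every edge `l = d - 1` times. A cycle passing through an inner vertex of a path must
traverse the whole path, so its length is a multiple of `d`. For expansion, call an edge mixed if
its path meets both `X` and its complement. Every mixed edge is charged to an external neighbor of
`X` on its path, and edge expansion of the multigraph makes the mixed edges numerous. -/

section Expanders

variable {W : Type*} [Fintype V] [Fintype W] {G : SimpleGraph V} {H : SimpleGraph W} {α β : ℝ}

theorem mem_extNbhd {X : Finset V} {v : V} :
    v ∈ extNbhd G X ↔ v ∉ X ∧ ∃ u ∈ X, G.Adj u v := by
  simp [extNbhd]

theorem extNbhd_map (φ : G ≃g H) (X : Finset V) :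
    extNbhd H (X.map φ.toEquiv.toEmbedding) = (extNbhd G X).map φ.toEquiv.toEmbedding := by
  ext w
  obtain ⟨v, rfl⟩ := φ.toEquiv.surjective w
  have map_adj (u : V) : H.Adj (φ.toEquiv u) (φ.toEquiv v) ↔ G.Adj u v := φ.map_adj_iff
  simp only [mem_extNbhd, mem_map_equiv, Equiv.symm_apply_apply, φ.toEquiv.surjective.exists,
    map_adj]

theorem IsExpander.mono (hG : IsExpander G β) (h : α ≤ β) : IsExpander G α :=
  fun X hX ↦ le_trans (by gcongr) (hG X hX)

theorem IsExpander.of_iso (hG : IsExpander G α) (φ : G ≃g H) : IsExpander H α := by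
  intro Y hY
  obtain ⟨X, rfl⟩ := φ.toEquiv.finsetCongr.surjective Y
  rw [Equiv.finsetCongr_apply, card_map, ← φ.card_eq] at hY
  rw [Equiv.finsetCongr_apply, extNbhd_map, card_map, card_map]
  exact hG X hY

end Expanders

section RandomPermutations

open Equiv
open scoped Nat Pointwise symmDiff

theorem div_pow_le_choose {n s : ℕ} (hsn : s ≤ n) : ((n : ℝ) / s) ^ s ≤ n.choose s := by
  induction s generalizing n with
  | zero => simp
  | succ s ih =>
    obtain ⟨m, rfl⟩ : ∃ m, n = m + 1 := ⟨n - 1, by omega⟩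
    have hsm : (s : ℝ) ≤ m := by exact_mod_cast Nat.succ_le_succ_iff.mp hsn
    have ratio_le : (((m + 1 : ℕ) : ℝ) / (s + 1 : ℕ)) ^ s ≤ ((m : ℝ) / s) ^ s := by
      rcases s.eq_zero_or_pos with rfl | hs
      · simp
      · gcongr ?_ ^ s
        rw [div_le_div_iff₀ (by positivity) (by positivity)]
        push_cast
        linarith
    calc (((m + 1 : ℕ) : ℝ) / (s + 1 : ℕ)) ^ (s + 1)
        ≤ m.choose s * (((m + 1 : ℕ) : ℝ) / (s + 1 : ℕ)) := by
          rw [pow_succ]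
          gcongr
          exact ratio_le.trans (ih (Nat.succ_le_succ_iff.mp hsn))
      _ = (m + 1).choose (s + 1) := by
          rw [mul_div_assoc', div_eq_iff (by positivity), mul_comm]
          exact_mod_cast Nat.add_one_mul_choose_eq m s

theorem two_pow_le_choose {n s : ℕ} (hsn : 2 * s ≤ n) : (2 : ℝ) ^ s ≤ n.choose s := by
  rcases s.eq_zero_or_pos with rfl | hs
  · simp
  calc (2 : ℝ) ^ s ≤ (n / s) ^ s := by
        gcongr
        rw [le_div_iff₀ (by positivity)]
        exact_mod_cast hsn
    _ ≤ n.choose s := div_pow_le_choose (by omega)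

theorem one_add_pow_le_two_pow {x : ℝ} (hx : -1 ≤ x) {m s : ℕ} (hmx : m * x ≤ s / 2) :
    (1 + x) ^ m ≤ 2 ^ s := by
  calc (1 + x) ^ m ≤ Real.exp x ^ m := by
        gcongr
        · linarith
        · linarith [Real.add_one_le_exp x]
    _ = Real.exp (m * x) := (Real.exp_nat_mul x m).symm
    _ ≤ Real.exp (s * Real.log 2) := by
        have : (s : ℝ) * (1 / 2) ≤ s * Real.log 2 := by
          gcongr
          linarith [Real.log_two_gt_d9]
        exact Real.exp_le_exp.mpr (by linarith)
    _ = 2 ^ s := by rw [Real.exp_nat_mul, Real.exp_log two_pos]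

theorem exists_one_add_pow_le_pow_mul_choose {n s t : ℕ} (hs : 0 < s) (hsn : 2 * s ≤ n)
    (ht : 10 * t ≤ s) :
    ∃ y : ℝ, 0 < y ∧ y ≤ 1 ∧ (1 + y) ^ (n * 3) ≤ y ^ t * n.choose s := by
  have hn : 0 < n := by omega
  -- `y = x ^ 5` keeps `(1 + y) ^ (6 * n)` below `2 ^ s`, while still `x ^ s ≤ y ^ (2 * t)`.
  set x : ℝ := s / n with hx
  have hx0 : 0 < x := by positivity
  have hx2 : x ≤ 1 / 2 := by
    rw [hx, div_le_div_iff₀ (by positivity) two_pos]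
    exact_mod_cast (by omega : s * 2 ≤ 1 * n)
  have one_add_pow_le : (1 + x ^ 5) ^ (n * 6) ≤ (2 : ℝ) ^ s := by
    refine one_add_pow_le_two_pow (by linarith [pow_pos hx0 5]) ?_
    calc ((n * 6 : ℕ) : ℝ) * x ^ 5 = (s : ℝ) * (6 * x ^ 4) := by
          rw [hx]
          push_cast
          field_simp
      _ ≤ (s : ℝ) * (6 * (1 / 2) ^ 4) := by gcongr
      _ ≤ s / 2 := by linarith [s.cast_nonneg (α := ℝ)]
  have sq_le : ((1 + x ^ 5) ^ (n * 3) * x ^ s) ^ 2 ≤ ((x ^ 5) ^ t) ^ 2 := by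
    calc ((1 + x ^ 5) ^ (n * 3) * x ^ s) ^ 2 = (1 + x ^ 5) ^ (n * 6) * x ^ s * x ^ s := by ring
      _ ≤ 2 ^ s * (1 / 2) ^ s * x ^ s := by gcongr
      _ = x ^ s := by rw [← mul_pow]; norm_num
      _ ≤ x ^ (10 * t) := pow_le_pow_of_le_one hx0.le (by linarith) ht
      _ = ((x ^ 5) ^ t) ^ 2 := by ring
  refine ⟨x ^ 5, by positivity, pow_le_one₀ hx0.le (by linarith), ?_⟩
  calc (1 + x ^ 5) ^ (n * 3) = (1 + x ^ 5) ^ (n * 3) * x ^ s * (n / s) ^ s := by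
        have : x * (n / s) = 1 := by rw [hx]; field_simp
        rw [mul_assoc, ← mul_pow, this, one_pow, mul_one]
    _ ≤ (x ^ 5) ^ t * n.choose s := by
        gcongr
        · exact le_of_pow_le_pow_left₀ two_ne_zero (by positivity) sq_le
        · exact div_pow_le_choose (by omega)

theorem sum_inv_choose_sq_lt_one [Fintype V] :
    ∑ A : Finset V with A.Nonempty ∧ 2 * #A ≤ Fintype.card V,
      1 / ((Fintype.card V).choose #A : ℝ) ^ 2 < 1 := by
  set n := Fintype.card V
  let f (s : ℕ) : ℝ := if 0 < s ∧ 2 * s ≤ n then 1 / (n.choose s : ℝ) ^ 2 else 0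
  have term_le (s : ℕ) : n.choose (s + 1) • f (s + 1) ≤ 1 / 2 * (1 / 2 : ℝ) ^ s := by
    unfold f
    split_ifs with h
    · have : (2 : ℝ) ^ (s + 1) ≤ n.choose (s + 1) := two_pow_le_choose h.2
      calc n.choose (s + 1) • (1 / (n.choose (s + 1) : ℝ) ^ 2) = 1 / n.choose (s + 1) := by
            rw [nsmul_eq_mul]
            field_simp
        _ ≤ 1 / 2 ^ (s + 1) := by gcongr
        _ = 1 / 2 * (1 / 2) ^ s := by rw [← one_div_pow, pow_succ']
    · simp only [smul_zero]
      positivity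
  calc ∑ A : Finset V with A.Nonempty ∧ 2 * #A ≤ n, 1 / (n.choose #A : ℝ) ^ 2
      = ∑ A ∈ (univ : Finset V).powerset, f #A := by
        simp only [f, sum_filter, card_pos, powerset_univ]
    _ = ∑ s ∈ range n, n.choose (s + 1) • f (s + 1) := by
        rw [sum_powerset_apply_card, card_univ, sum_range_succ']
        simp only [f, lt_irrefl, false_and, if_false, smul_zero, add_zero, n]
    _ ≤ ∑ s ∈ range n, 1 / 2 * (1 / 2 : ℝ) ^ s := sum_le_sum fun s _ ↦ term_le s
    _ = 1 - (1 / 2) ^ n := by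
        rw [← mul_sum, geom_sum_eq (by norm_num)]
        ring
    _ < 1 := by linarith [pow_pos (one_half_pos (α := ℝ)) n]

variable [DecidableEq V]

theorem exists_perm_smul_eq_of_card_eq {A B : Finset V} (h : #A = #B) :
    ∃ τ : Perm V, τ • A = B := by
  obtain ⟨τ, hτ⟩ := (Set.powersetCard.isPretransitive (α := V) (n := #B)).exists_smul_eq
    ⟨A, h⟩ ⟨B, rfl⟩
  exact ⟨τ, congrArg Subtype.val hτ⟩

variable [Fintype V]

theorem choose_mul_sum_perm_smul {R : Type*} [CommSemiring R] (f : Finset V → R) (A : Finset V) :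
    (Fintype.card V).choose #A * ∑ σ : Perm V, f (σ • A) =
      (Fintype.card V)! * ∑ B ∈ powersetCard #A univ, f B := by
  have sum_eq : ∀ B ∈ powersetCard #A univ,
      ∑ σ : Perm V, f (σ • B) = ∑ σ : Perm V, f (σ • A) := by
    intro B hB
    obtain ⟨τ, rfl⟩ := exists_perm_smul_eq_of_card_eq (mem_powersetCard_univ.mp hB).symm
    simpa only [smul_smul, coe_mulRight] using
      Equiv.sum_comp (Equiv.mulRight τ) fun σ : Perm V ↦ f (σ • A)
  have sum_smul (σ : Perm V) :
      ∑ B ∈ powersetCard #A univ, f (σ • B) = ∑ B ∈ powersetCard #A univ, f B :=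
    sum_equiv (MulAction.toPerm σ) (by simp) (by simp)
  calc (Fintype.card V).choose #A * ∑ σ : Perm V, f (σ • A)
      = ∑ B ∈ powersetCard #A univ, ∑ σ : Perm V, f (σ • B) := by
        rw [sum_congr rfl sum_eq, sum_const, card_powersetCard, card_univ, nsmul_eq_mul]
    _ = ∑ σ : Perm V, ∑ B ∈ powersetCard #A univ, f (σ • B) := sum_comm
    _ = (Fintype.card V)! * ∑ B ∈ powersetCard #A univ, f B := by
        rw [sum_congr rfl fun σ _ ↦ sum_smul σ, sum_const, card_univ, Fintype.card_perm,
          nsmul_eq_mul]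

theorem sum_pow_card_symmDiff {R : Type*} [CommSemiring R] (A : Finset V) (y : R) :
    ∑ B, y ^ #(A ∆ B) = (1 + y) ^ Fintype.card V := by
  rw [(symmDiff_right_involutive A).bijective.sum_comp fun B ↦ y ^ #B, add_comm 1 y]
  simpa using Fintype.sum_pow_mul_eq_add_pow V y 1

theorem choose_mul_sum_perm_pow_card_symmDiff_le (A : Finset V) {y : ℝ} (hy : 0 ≤ y) :
    (Fintype.card V).choose #A * ∑ σ : Perm V, y ^ #(A ∆ (σ • A)) ≤
      (Fintype.card V)! * (1 + y) ^ Fintype.card V := by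
  rw [choose_mul_sum_perm_smul fun B ↦ y ^ #(A ∆ B), ← sum_pow_card_symmDiff A]
  gcongr
  exact subset_univ _

-- Markov inequality for `y ^ ∑ i, #(A ∆ (σ i • A))`, whose sum over `σ` factors over `i`.
theorem card_filter_sum_card_symmDiff_mul_pow_le (A : Finset V) (d t : ℕ) {y : ℝ}
    (hy : 0 ≤ y) (hy1 : y ≤ 1) :
    #{σ : Fin d → Perm V | ∑ i, #(A ∆ (σ i • A)) ≤ t} * y ^ t *
        (Fintype.card V).choose #A ^ d ≤
      (Fintype.card V)! ^ d * (1 + y) ^ (Fintype.card V * d) := by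
  have sum_pow_le : #{σ : Fin d → Perm V | ∑ i, #(A ∆ (σ i • A)) ≤ t} * y ^ t ≤
      (∑ σ : Perm V, y ^ #(A ∆ (σ • A))) ^ d := by
    calc #{σ : Fin d → Perm V | ∑ i, #(A ∆ (σ i • A)) ≤ t} * y ^ t
        ≤ ∑ σ : Fin d → Perm V with ∑ i, #(A ∆ (σ i • A)) ≤ t, y ^ ∑ i, #(A ∆ (σ i • A)) := by
          rw [← nsmul_eq_mul]
          exact card_nsmul_le_sum _ _ _ fun σ hσ ↦
            pow_le_pow_of_le_one hy hy1 (mem_filter.mp hσ).2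
      _ ≤ ∑ σ : Fin d → Perm V, y ^ ∑ i, #(A ∆ (σ i • A)) :=
          sum_le_univ_sum_of_nonneg fun σ ↦ by positivity
      _ = (∑ σ : Perm V, y ^ #(A ∆ (σ • A))) ^ d := by
          simp only [Fintype.sum_pow, prod_pow_eq_pow_sum]
  calc #{σ : Fin d → Perm V | ∑ i, #(A ∆ (σ i • A)) ≤ t} * y ^ t *
        (Fintype.card V).choose #A ^ d
      ≤ (∑ σ : Perm V, y ^ #(A ∆ (σ • A))) ^ d * (Fintype.card V).choose #A ^ d := by gcongr
    _ = ((Fintype.card V).choose #A * ∑ σ : Perm V, y ^ #(A ∆ (σ • A))) ^ d := by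
        rw [← mul_pow, mul_comm]
    _ ≤ ((Fintype.card V)! * (1 + y) ^ Fintype.card V) ^ d :=
        pow_le_pow_left₀ (by positivity) (choose_mul_sum_perm_pow_card_symmDiff_le A hy) d
    _ = (Fintype.card V)! ^ d * (1 + y) ^ (Fintype.card V * d) := by rw [mul_pow, pow_mul]

theorem card_filter_sum_card_symmDiff_le {A : Finset V} (hA : A.Nonempty)
    (hAV : 2 * #A ≤ Fintype.card V) :
    (#{σ : Fin 3 → Perm V | 10 * ∑ i, #(A ∆ (σ i • A)) ≤ #A} : ℝ) ≤
      (Fintype.card V)! ^ 3 / (Fintype.card V).choose #A ^ 2 := by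
  obtain ⟨y, hy, hy1, h⟩ :=
    exists_one_add_pow_le_pow_mul_choose hA.card_pos hAV (Nat.mul_div_le #A 10)
  have hcard := card_filter_sum_card_symmDiff_mul_pow_le A 3 (#A / 10) hy.le hy1
  have hchoose : (0 : ℝ) < (Fintype.card V).choose #A := by
    exact_mod_cast Nat.choose_pos (by omega)
  simp only [Nat.le_div_iff_mul_le (show 0 < 10 by norm_num), mul_comm _ 10] at hcard
  rw [le_div_iff₀ (by positivity)]
  refine le_of_mul_le_mul_right ?_ (by positivity : 0 < y ^ (#A / 10) * (Fintype.card V).choose #A)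
  calc _ = #{σ : Fin 3 → Perm V | 10 * ∑ i, #(A ∆ (σ i • A)) ≤ #A} * y ^ (#A / 10) *
        (Fintype.card V).choose #A ^ 3 := by ring
    _ ≤ (Fintype.card V)! ^ 3 * (1 + y) ^ (Fintype.card V * 3) := hcard
    _ ≤ (Fintype.card V)! ^ 3 * (y ^ (#A / 10) * (Fintype.card V).choose #A) := by gcongr

theorem exists_perms_card_le_sum_card_symmDiff :
    ∃ σ : Fin 3 → Perm V, ∀ A : Finset V, 2 * #A ≤ Fintype.card V →
      #A ≤ 10 * ∑ i, #(A ∆ (σ i • A)) := by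
  by_contra! hbad
  have hcover : (univ : Finset (Fin 3 → Perm V)) ⊆
      ({A | A.Nonempty ∧ 2 * #A ≤ Fintype.card V} : Finset (Finset V)).biUnion
        fun A ↦ {σ | 10 * ∑ i, #(A ∆ (σ i • A)) ≤ #A} := by
    intro σ _
    obtain ⟨A, hAV, hlt⟩ := hbad σ
    simp only [mem_biUnion, mem_filter_univ]
    exact ⟨A, ⟨card_pos.mp (by omega), hAV⟩, hlt.le⟩
  have hcard : ((Fintype.card V)! : ℝ) ^ 3 ≤
      ∑ A : Finset V with A.Nonempty ∧ 2 * #A ≤ Fintype.card V,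
        (#{σ : Fin 3 → Perm V | 10 * ∑ i, #(A ∆ (σ i • A)) ≤ #A} : ℝ) := by
    have := (card_le_card hcover).trans card_biUnion_le
    rw [card_univ, Fintype.card_fun, Fintype.card_fin, Fintype.card_perm] at this
    exact_mod_cast this
  refine lt_irrefl (((Fintype.card V)! : ℝ) ^ 3) ?_
  calc ((Fintype.card V)! : ℝ) ^ 3
      ≤ ∑ A : Finset V with A.Nonempty ∧ 2 * #A ≤ Fintype.card V,
        (Fintype.card V)! ^ 3 * (1 / ((Fintype.card V).choose #A : ℝ) ^ 2) := by
        refine hcard.trans (sum_le_sum fun A hA ↦ ?_)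
        rw [mul_one_div]
        exact card_filter_sum_card_symmDiff_le (mem_filter.mp hA).2.1 (mem_filter.mp hA).2.2
    _ < (Fintype.card V)! ^ 3 * 1 := by
        rw [← mul_sum]
        gcongr
        exact sum_inv_choose_sq_lt_one
    _ = (Fintype.card V)! ^ 3 := mul_one _

end RandomPermutations

section Subdivision

variable {E : Type*} (s t : E → V) (l : ℕ)

/-- The `j`-th vertex, for `0 ≤ j ≤ l + 1`, of the path of length `l + 1` that replaces the edge `e`
of the multigraph on `V` with edge endpoints `s e` and `t e`; loops and parallel edges are allowed.
The first component of `V ⊕ E × Fin l` holds the original vertices, the second the new ones.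
All indices `j > l` give `t e`. -/
def pathVertex (e : E) : ℕ → V ⊕ E × Fin l
  | 0 => .inl (s e)
  | j + 1 => if h : j < l then .inr (e, ⟨j, h⟩) else .inl (t e)

/-- The `j`-th edge, for `0 ≤ j ≤ l`, of the path that replaces the edge `e`. -/
def pathEdge (e : E) (j : ℕ) : Sym2 (V ⊕ E × Fin l) :=
  s(pathVertex s t l e j, pathVertex s t l e (j + 1))

/-- The graph obtained from the multigraph on `V` with edge endpoints `s e` and `t e` by subdividing
every edge exactly `l` times. -/
def subdivision : SimpleGraph (V ⊕ E × Fin l) :=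
  .fromEdgeSet {a | ∃ e, ∃ j ≤ l, pathEdge s t l e j = a}

variable {s t l} {e e' : E} {i j : ℕ}

@[simp]
theorem pathVertex_zero : pathVertex s t l e 0 = .inl (s e) := rfl

theorem pathVertex_add_one (hj : j < l) : pathVertex s t l e (j + 1) = .inr (e, ⟨j, hj⟩) :=
  dif_pos hj

@[simp]
theorem pathVertex_last : pathVertex s t l e (l + 1) = .inl (t e) := dif_neg (lt_irrefl l)

theorem eq_and_eq_of_pathVertex_add_one_eq (hi : i < l)
    (h : pathVertex s t l e (i + 1) = pathVertex s t l e' j) : e = e' ∧ i + 1 = j := by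
  rw [pathVertex_add_one hi] at h
  rcases j with _ | j
  · simp at h
  · by_cases hj : j < l
    · simpa [pathVertex_add_one hj] using h
    · simp [pathVertex, hj] at h

theorem subdivision_adj_pathVertex (hj : j ≤ l)
    (hne : pathVertex s t l e j ≠ pathVertex s t l e (j + 1)) :
    (subdivision s t l).Adj (pathVertex s t l e j) (pathVertex s t l e (j + 1)) :=
  SimpleGraph.fromEdgeSet_adj _ |>.mpr ⟨⟨e, j, hj, rfl⟩, hne⟩

section Cycles

theorem eq_or_eq_of_subdivision_adj (hj : j < l) {b : V ⊕ E × Fin l}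
    (h : (subdivision s t l).Adj (pathVertex s t l e (j + 1)) b) :
    b = pathVertex s t l e j ∨ b = pathVertex s t l e (j + 2) := by
  obtain ⟨⟨e', i, -, hi⟩, -⟩ := (SimpleGraph.fromEdgeSet_adj _).mp h
  rcases Sym2.eq_iff.mp hi with ⟨hab, rfl⟩ | ⟨rfl, hab⟩
  · obtain ⟨rfl, rfl⟩ := eq_and_eq_of_pathVertex_add_one_eq hj hab.symm
    exact .inr rfl
  · obtain ⟨rfl, hij⟩ := eq_and_eq_of_pathVertex_add_one_eq hj hab.symm
    obtain rfl : j = i := Nat.succ.inj hij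
    exact .inl rfl

variable {x : V ⊕ E × Fin l} {w : (subdivision s t l).Walk x x}

theorem neighborSet_toSubgraph_pathVertex (hw : w.IsCycle) (hj : j < l)
    (hmem : pathVertex s t l e (j + 1) ∈ w.support) :
    w.toSubgraph.neighborSet (pathVertex s t l e (j + 1)) =
      {pathVertex s t l e j, pathVertex s t l e (j + 2)} :=
  Set.eq_of_subset_of_ncard_le (fun _ hb ↦ eq_or_eq_of_subdivision_adj hj hb.adj_sub) <| by
    rw [hw.ncard_neighborSet_toSubgraph_eq_two hmem]
    exact (Set.ncard_insert_le _ _).trans (by rw [Set.ncard_singleton])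

theorem pathEdge_mem_edges_iff (hw : w.IsCycle) (hj : j < l) :
    pathEdge s t l e j ∈ w.edges ↔ pathVertex s t l e (j + 1) ∈ w.support := by
  refine ⟨w.snd_mem_support_of_mem_edges, fun hmem ↦ ?_⟩
  have : pathVertex s t l e j ∈ w.toSubgraph.neighborSet (pathVertex s t l e (j + 1)) := by
    simp [neighborSet_toSubgraph_pathVertex hw hj hmem]
  exact w.adj_toSubgraph_iff_mem_edges.mp this.symm

theorem pathEdge_add_one_mem_edges_iff (hw : w.IsCycle) (hj : j < l) :
    pathEdge s t l e (j + 1) ∈ w.edges ↔ pathVertex s t l e (j + 1) ∈ w.support := by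
  refine ⟨w.fst_mem_support_of_mem_edges, fun hmem ↦ ?_⟩
  have : pathVertex s t l e (j + 2) ∈ w.toSubgraph.neighborSet (pathVertex s t l e (j + 1)) := by
    simp [neighborSet_toSubgraph_pathVertex hw hj hmem]
  exact w.adj_toSubgraph_iff_mem_edges.mp this

theorem pathEdge_mem_edges_iff_pathEdge_zero (hw : w.IsCycle) (hj : j ≤ l) :
    pathEdge s t l e j ∈ w.edges ↔ pathEdge s t l e 0 ∈ w.edges := by
  induction j with
  | zero => rfl
  | succ j ih =>
    rw [pathEdge_add_one_mem_edges_iff hw hj, ← pathEdge_mem_edges_iff hw hj, ih (by omega)]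

theorem pathVertex_ne_of_mem_edges (hw : w.IsCycle) (hj : j < l)
    (hmem : pathEdge s t l e j ∈ w.edges) :
    pathVertex s t l e j ≠ pathVertex s t l e (j + 2) := by
  rw [pathEdge_mem_edges_iff hw hj] at hmem
  have hcard := hw.ncard_neighborSet_toSubgraph_eq_two hmem
  rw [neighborSet_toSubgraph_pathVertex hw hj hmem] at hcard
  intro heq
  simp [heq] at hcard

theorem pathEdge_injOn (hl : 0 < l) (hw : w.IsCycle) :
    Set.InjOn (fun p : E × ℕ ↦ pathEdge s t l p.1 p.2)
      {p | p.2 ≤ l ∧ pathEdge s t l p.1 p.2 ∈ w.edges} := by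
  rintro ⟨e, j⟩ ⟨hj, hmem⟩ ⟨e', j'⟩ ⟨hj', hmem'⟩ h
  dsimp only at hj hmem hj' hmem' h
  rcases Sym2.eq_iff.mp h with ⟨h₁, h₂⟩ | ⟨h₁, h₂⟩
  · rcases j with _ | j
    · obtain ⟨rfl, hjj'⟩ := eq_and_eq_of_pathVertex_add_one_eq hl h₂
      exact congrArg _ (Nat.succ.inj hjj')
    · obtain ⟨rfl, rfl⟩ := eq_and_eq_of_pathVertex_add_one_eq hj h₁
      rfl
  · rcases j with _ | j
    · obtain ⟨rfl, rfl⟩ := eq_and_eq_of_pathVertex_add_one_eq hl h₂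
      exact absurd h₁ (pathVertex_ne_of_mem_edges hw hj' hmem)
    · obtain ⟨rfl, hjj'⟩ := eq_and_eq_of_pathVertex_add_one_eq hj h₁
      obtain rfl : j = j' := Nat.succ.inj hjj'
      exact absurd h₂.symm (pathVertex_ne_of_mem_edges hw hj hmem')

theorem edgeSet_eq_image_pathEdge (hw : w.IsCycle) :
    w.edgeSet = (fun p : E × ℕ ↦ pathEdge s t l p.1 p.2) ''
      {e | pathEdge s t l e 0 ∈ w.edges} ×ˢ Set.Iic l := by
  ext a
  constructor
  · intro ha
    have : a ∈ (subdivision s t l).edgeSet := w.edges_subset_edgeSet ha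
    rw [subdivision, SimpleGraph.edgeSet_fromEdgeSet] at this
    obtain ⟨⟨e, j, hj, rfl⟩, -⟩ := this
    exact ⟨(e, j), ⟨(pathEdge_mem_edges_iff_pathEdge_zero hw hj).mp ha, hj⟩, rfl⟩
  · rintro ⟨⟨e, j⟩, ⟨he, hj⟩, rfl⟩
    exact (pathEdge_mem_edges_iff_pathEdge_zero hw hj).mpr he

theorem add_one_dvd_length_of_isCycle (hw : w.IsCycle) : l + 1 ∣ w.length := by
  classical
  rcases l.eq_zero_or_pos with rfl | hl
  · exact one_dvd _
  have ncard_edgeSet : w.edgeSet.ncard = w.length := by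
    rw [← w.coe_edges_toFinset, Set.ncard_coe_finset, List.toFinset_card_of_nodup hw.edges_nodup,
      w.length_edges]
  have hinj : Set.InjOn (fun p : E × ℕ ↦ pathEdge s t l p.1 p.2)
      ({e | pathEdge s t l e 0 ∈ w.edges} ×ˢ Set.Iic l) :=
    (pathEdge_injOn hl hw).mono fun _ hp ↦
      And.intro hp.2 ((pathEdge_mem_edges_iff_pathEdge_zero hw hp.2).mpr hp.1)
  rw [← ncard_edgeSet, edgeSet_eq_image_pathEdge hw, hinj.ncard_image, Set.ncard_prod,
    Set.ncard_eq_toFinset_card' (Set.Iic l), Set.toFinset_Iic, Nat.card_Iic]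
  exact dvd_mul_left _ _

end Cycles

section Expansion

variable [DecidableEq V] [Fintype E]

/-- The edges of the multigraph with edge endpoints `s e` and `t e` that have exactly one endpoint
in `A`. -/
def edgeCut (s t : E → V) (A : Finset V) : Finset E :=
  {e | ¬(s e ∈ A ↔ t e ∈ A)}

theorem card_filter_source_mem_le {Δ : ℕ} (hΔ : ∀ v, #{e | s e = v ∨ t e = v} ≤ Δ) (A : Finset V) :
    #{e | s e ∈ A} ≤ #A * Δ := by
  classical
  have : ({e | s e ∈ A} : Finset E) ⊆ A.biUnion fun v ↦ {e | s e = v ∨ t e = v} := by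
    intro e he
    simp only [mem_biUnion, mem_filter_univ] at he ⊢
    exact ⟨s e, he, .inl rfl⟩
  exact (card_le_card this).trans (card_biUnion_le_card_mul _ _ _ fun v _ ↦ hΔ v)

section MixedEdges

variable [DecidableEq E] {X : Finset (V ⊕ E × Fin l)}

variable (s t) in
/-- The edges whose subdividing path is neither contained in `X` nor disjoint from it. -/
def mixedEdges (X : Finset (V ⊕ E × Fin l)) : Finset E :=
  {e | ∃ j ≤ l, ¬(pathVertex s t l e j ∈ X ↔ pathVertex s t l e (j + 1) ∈ X)}

theorem pathVertex_mem_iff_of_notMem_mixedEdges (he : e ∉ mixedEdges s t X) (hj : j ≤ l + 1) :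
    pathVertex s t l e j ∈ X ↔ .inl (s e) ∈ X := by
  simp only [mixedEdges, mem_filter_univ, not_exists, not_and, not_not] at he
  induction j with
  | zero => rfl
  | succ j ih => rw [← he j (by omega), ih (by omega)]

theorem edgeCut_toLeft_subset_mixedEdges : edgeCut s t X.toLeft ⊆ mixedEdges s t X := by
  intro e he
  contrapose! he
  simpa [edgeCut] using (pathVertex_mem_iff_of_notMem_mixedEdges he le_rfl).symm

theorem card_le_card_toLeft_add {Δ : ℕ} (hΔ : ∀ v, #{e | s e = v ∨ t e = v} ≤ Δ) :
    #X ≤ #X.toLeft + (#X.toLeft * Δ + #(mixedEdges s t X)) * l := by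
  have toRight_subset :
      X.toRight ⊆ (({e | s e ∈ X.toLeft} : Finset E) ∪ mixedEdges s t X) ×ˢ univ := by
    rintro ⟨e, j, hj⟩ he
    by_cases hmixed : e ∈ mixedEdges s t X
    · simp [hmixed]
    · rw [mem_toRight, ← pathVertex_add_one (s := s) (t := t) hj,
        pathVertex_mem_iff_of_notMem_mixedEdges hmixed (by omega)] at he
      simp [he]
  calc #X = #X.toLeft + #X.toRight := card_toLeft_add_card_toRight.symm
    _ ≤ #X.toLeft + (#{e | s e ∈ X.toLeft} + #(mixedEdges s t X)) * l := by
        gcongr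
        refine (card_le_card toRight_subset).trans ?_
        rw [card_product, card_univ, Fintype.card_fin]
        gcongr
        exact card_union_le _ _
    _ ≤ #X.toLeft + (#X.toLeft * Δ + #(mixedEdges s t X)) * l := by
        gcongr
        exact card_filter_source_mem_le hΔ _

theorem mul_card_le_mul_card_mixedEdges {Δ : ℕ} (hΔ : ∀ v, #{e | s e = v ∨ t e = v} ≤ Δ) {h : ℝ}
    (hh : 0 ≤ h) (hX : h * #X.toLeft ≤ #(edgeCut s t X.toLeft)) :
    h * #X ≤ (1 + l * (Δ + h)) * #(mixedEdges s t X) := by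
  have hcut : h * #X.toLeft ≤ #(mixedEdges s t X) :=
    hX.trans (by exact_mod_cast card_le_card edgeCut_toLeft_subset_mixedEdges)
  calc h * #X ≤ h * (#X.toLeft + (#X.toLeft * Δ + #(mixedEdges s t X)) * l) := by
        gcongr
        exact_mod_cast card_le_card_toLeft_add hΔ
    _ = (1 + l * Δ) * (h * #X.toLeft) + l * h * #(mixedEdges s t X) := by ring
    _ ≤ (1 + l * Δ) * #(mixedEdges s t X) + l * h * #(mixedEdges s t X) := by gcongr
    _ = (1 + l * (Δ + h)) * #(mixedEdges s t X) := by ring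

variable [Fintype V]

theorem mixedEdges_compl : mixedEdges s t Xᶜ = mixedEdges s t X := by
  simp only [mixedEdges, mem_compl, not_iff_not]

theorem exists_pathVertex_mem_extNbhd (he : e ∈ mixedEdges s t X) :
    ∃ j, pathVertex s t l e j ∈ extNbhd (subdivision s t l) X := by
  obtain ⟨j, hj, hX⟩ := mem_filter_univ _ |>.mp he
  have hadj := subdivision_adj_pathVertex hj fun h ↦ hX (by rw [h])
  by_cases hmem : pathVertex s t l e j ∈ X
  · exact ⟨j + 1, mem_extNbhd.mpr ⟨by tauto, _, hmem, hadj⟩⟩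
  · exact ⟨j, mem_extNbhd.mpr ⟨hmem, _, by tauto, hadj.symm⟩⟩

theorem card_mixedEdges_le {Δ : ℕ} (hΔ : ∀ v, #{e | s e = v ∨ t e = v} ≤ Δ) :
    #(mixedEdges s t X) ≤ #(extNbhd (subdivision s t l) X) * Δ := by
  let base : V ⊕ E × Fin l → V := Sum.elim id fun p ↦ s p.1
  have base_pathVertex (e : E) (j : ℕ) :
      s e = base (pathVertex s t l e j) ∨ t e = base (pathVertex s t l e j) := by
    rcases j with _ | j
    · exact .inl rfl
    · by_cases hj : j < l <;> simp [pathVertex, hj, base]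
  have : mixedEdges s t X ⊆ (extNbhd (subdivision s t l) X).biUnion
      fun v ↦ {e | s e = base v ∨ t e = base v} := by
    intro e he
    obtain ⟨j, hj⟩ := exists_pathVertex_mem_extNbhd he
    exact mem_biUnion.mpr ⟨_, hj, mem_filter_univ _ |>.mpr (base_pathVertex e j)⟩
  exact (card_le_card this).trans (card_biUnion_le_card_mul _ _ _ fun v _ ↦ hΔ (base v))

end MixedEdges

theorem isExpander_subdivision [Fintype V] {Δ : ℕ} (hΔ : ∀ v, #{e | s e = v ∨ t e = v} ≤ Δ) {h : ℝ}
    (hh : 0 ≤ h)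
    (hcut : ∀ A : Finset V, 2 * #A ≤ Fintype.card V → h * #A ≤ #(edgeCut s t A)) :
    IsExpander (subdivision s t l) (h / (Δ * (1 + l * (Δ + h)))) := by
  classical
  intro X hX
  have hXcompl : #X ≤ #Xᶜ := by
    have : 2 * #X ≤ Fintype.card (V ⊕ E × Fin l) := by
      rw [le_div_iff₀ two_pos, mul_comm] at hX
      exact_mod_cast hX
    rw [card_compl]
    omega
  -- The complement has the same mixed edges, so one may replace `X` by `Xᶜ`.
  have mul_card_le : h * #X ≤ (1 + l * (Δ + h)) * #(mixedEdges s t X) := by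
    by_cases hleft : 2 * #X.toLeft ≤ Fintype.card V
    · exact mul_card_le_mul_card_mixedEdges hΔ hh (hcut _ hleft)
    · have hleft' : 2 * #Xᶜ.toLeft ≤ Fintype.card V := by
        have : Xᶜ.toLeft = X.toLeftᶜ := by ext; simp
        rw [this, card_compl]
        omega
      rw [← mixedEdges_compl]
      exact le_trans (by gcongr) (mul_card_le_mul_card_mixedEdges hΔ hh (hcut _ hleft'))
  rw [div_mul_eq_mul_div]
  refine div_le_of_le_mul₀ (by positivity) (by positivity) ?_
  calc h * #X ≤ (1 + l * (Δ + h)) * #(mixedEdges s t X) := mul_card_le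
    _ ≤ (1 + l * (Δ + h)) * (#(extNbhd (subdivision s t l) X) * Δ) := by
        gcongr
        exact_mod_cast card_mixedEdges_le hΔ
    _ = #(extNbhd (subdivision s t l) X) * (Δ * (1 + l * (Δ + h))) := by ring

end Expansion

end Subdivision

section PermutationMultigraph

open Equiv
open scoped Pointwise symmDiff

variable {ι : Type*} [Fintype V] [DecidableEq V] [Fintype ι] (σ : ι → Perm V)

theorem card_filter_incident_perm_le (v : V) :
    #{e : V × ι | e.1 = v ∨ (σ e.2)⁻¹ e.1 = v} ≤ 2 * Fintype.card ι := by
  classical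
  have : ({e | e.1 = v ∨ (σ e.2)⁻¹ e.1 = v} : Finset (V × ι)) ⊆
      univ.image (fun i ↦ (v, i)) ∪ univ.image fun i ↦ (σ i v, i) := by
    rintro ⟨u, i⟩ he
    rw [mem_filter_univ, Perm.inv_eq_iff_eq] at he
    simpa [eq_comm] using he
  refine (card_le_card this).trans ((card_union_le _ _).trans ?_)
  rw [two_mul]
  exact add_le_add card_image_le card_image_le

theorem card_edgeCut_perm (A : Finset V) :
    #(edgeCut Prod.fst (fun e : V × ι ↦ (σ e.2)⁻¹ e.1) A) = ∑ i, #(A ∆ (σ i • A)) := by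
  have symmDiff_smul (i : ι) : A ∆ (σ i • A) = ({v | ¬(v ∈ A ↔ (σ i)⁻¹ v ∈ A)} : Finset V) := by
    ext v
    rw [mem_symmDiff, ← inv_smul_mem_iff, Perm.smul_def, mem_filter_univ]
    tauto
  simp only [symmDiff_smul, edgeCut, card_filter, Fintype.sum_prod_type_right]

theorem exists_multigraph_card_le_card_edgeCut :
    ∃ s t : V × Fin 3 → V, (∀ v, #{e | s e = v ∨ t e = v} ≤ 6) ∧
      ∀ A : Finset V, 2 * #A ≤ Fintype.card V → (1 / 10 : ℝ) * #A ≤ #(edgeCut s t A) := by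
  obtain ⟨σ, hσ⟩ := exists_perms_card_le_sum_card_symmDiff (V := V)
  refine ⟨Prod.fst, fun e ↦ (σ e.2)⁻¹ e.1, card_filter_incident_perm_le σ, fun A hA ↦ ?_⟩
  have : (#A : ℝ) ≤ 10 * #(edgeCut Prod.fst (fun e : V × Fin 3 ↦ (σ e.2)⁻¹ e.1) A) := by
    rw [card_edgeCut_perm]
    exact_mod_cast hσ A hA
  linarith

end PermutationMultigraph

theorem natCast_zmod_ne_one_of_dvd {d k m : ℕ} (hd : d ≠ 1) (hdk : d ∣ k) (hdm : d ∣ m) :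
    (m : ZMod k) ≠ 1 := by
  intro h
  have hmod : m ≡ 1 [MOD k] := by
    rw [← ZMod.natCast_eq_natCast_iff, h, Nat.cast_one]
  exact hd (Nat.dvd_one.mp (((hmod.of_dvd hdk).dvd_iff dvd_rfl).mp hdm))

theorem stmt17_general :
    ∃ c : ℝ, 0 < c ∧ ∀ d k : ℕ, 1 < d → d ∣ k → ∀ α : ℝ, α < c / ((d : ℝ) - 1) → ∀ n₀ : ℕ,
      ∃ n : ℕ, ∃ G : SimpleGraph (Fin n), n₀ ≤ n ∧ IsExpander G α ∧
        (∀ v : Fin n, ∀ w : G.Walk v v, w.IsCycle → d ∣ w.length) ∧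
        (∀ v : Fin n, ∀ w : G.Walk v v, w.IsCycle → ((w.length : ZMod k) ≠ 1)) := by
  refine ⟨1 / 426, by norm_num, fun d k hd hdk α hα n₀ ↦ ?_⟩
  obtain ⟨l, rfl⟩ : ∃ l, d = l + 1 := ⟨d - 1, by omega⟩
  have hl : (1 : ℝ) ≤ l := by exact_mod_cast Nat.lt_add_one_iff.mp (by simpa using hd)
  obtain ⟨s, t, hdeg, hcut⟩ := exists_multigraph_card_le_card_edgeCut (V := Fin n₀)
  let φ := (subdivision s t l).overFinIso rfl
  have hdvd v (w : ((subdivision s t l).overFin rfl).Walk v v) (hw : w.IsCycle) :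
      l + 1 ∣ w.length := by
    simpa using add_one_dvd_length_of_isCycle (hw.map (f := φ.symm.toHom) φ.symm.injective)
  refine ⟨_, (subdivision s t l).overFin rfl, ?_, ?_, hdvd,
    fun v w hw ↦ natCast_zmod_ne_one_of_dvd hd.ne' hdk (hdvd v w hw)⟩
  · simp
  · refine ((isExpander_subdivision hdeg (by norm_num) hcut).mono (hα.le.trans ?_)).of_iso φ
    -- `c` comes from `10 * 6 * (1 + l * (6 + 1 / 10)) ≤ 426 * l`, valid as `1 ≤ l`.
    rw [Nat.cast_add_one, add_sub_cancel_right, div_div,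
      div_le_div_iff₀ (by positivity) (by positivity)]
    push_cast
    linarith

/-- There is an absolute constant c > 0 such that for every k > 1 with smallest prime
divisor p and every 0 < α < c/(p-1), there exist arbitrarily large α-expanding graphs in
which every cycle has length divisible by p; in particular with no cycle of length
congruent to 1 modulo k. -/
theorem stmt17 :
    ∃ c : ℝ, 0 < c ∧ ∀ k : ℕ, 1 < k → ∀ α : ℝ, 0 < α →
      α < c / ((k.minFac : ℝ) - 1) → ∀ n₀ : ℕ,
      ∃ n : ℕ, ∃ G : SimpleGraph (Fin n), n₀ ≤ n ∧ IsExpander G α ∧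
        (∀ v : Fin n, ∀ w : G.Walk v v, w.IsCycle → k.minFac ∣ w.length) ∧
        (∀ v : Fin n, ∀ w : G.Walk v v, w.IsCycle → ((w.length : ZMod k) ≠ 1)) := by
  obtain ⟨c, hc, H⟩ := stmt17_general
  exact ⟨c, hc, fun k hk α _ ↦ H _ k (Nat.minFac_prime hk.ne').one_lt (Nat.minFac_dvd k) α⟩
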